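/- arXiv:2509.10263 — 8 statements merged into one kernel-verified Lean document; each statement's English description precedes it below -/
import Mathlib

section
/- Let F be a logarithmically homogeneous barrier with negative curvature for a regular cone K ⊂ ℝⁿ. Then for all x ∈ int K and all h ∈ ℝⁿ, the directional third derivative satisfies −2σₓ(h)·F''(x) ⪯ F'''(x;h) ⪯ 2σₓ(−h)·F''(x), as an inequality of symmetric bilinear forms. -/
open scoped RealInnerProductSpace
open Set

noncomputable section

variable {E : Type*} [NormedAddCommGroup E] [InnerProductSpace ℝ E] [CompleteSpace E]

/-- The dual cone `K* = {s : ⟨s,x⟩ ≥ 0 for all x ∈ K}`. -/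
def dualCone (K : Set E) : Set E := {s | ∀ x ∈ K, 0 ≤ ⟪s, x⟫}

/-- `K` is a regular cone: closed, convex, a cone, pointed, with nonempty interior. -/
def IsRegularCone (K : Set E) : Prop :=
  IsClosed K ∧ Convex ℝ K ∧ (∀ x ∈ K, ∀ t : ℝ, 0 ≤ t → t • x ∈ K) ∧
    (∀ x, x ∈ K → -x ∈ K → x = 0) ∧ (interior K).Nonempty

/-- The Minkowski gauge `σ_x(h) = inf {β ≥ 0 : β • x - h ∈ K}`. -/
def mink (K : Set E) (x h : E) : ℝ := sInf {β : ℝ | 0 ≤ β ∧ β • x - h ∈ K}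

/-- The Hessian `F''(x)` of `F` at `x`, as a continuous linear map. -/
def Hess (F : E → ℝ) (x : E) : E →L[ℝ] E := fderiv ℝ (fun y => gradient F y) x

/-- The directional third derivative `F'''(x;h)`: the directional derivative of the Hessian
of `F` at `x` in the direction `h`, as a continuous linear map. -/
def D3 (F : E → ℝ) (x h : E) : E →L[ℝ] E := fderiv ℝ (fun y => Hess F y) x h

/-- The local norm `‖h‖ₓ = ⟨F''(x) h, h⟩^{1/2}`. -/
def localNorm (F : E → ℝ) (x h : E) : ℝ := Real.sqrt ⟪Hess F x h, h⟫

/-- `F` is a ϑ-logarithmically homogeneous barrier for `K`: a three times continuously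
differentiable convex function on `int K`, with positive definite Hessians, satisfying
`F (t • x) = F x - ϑ ln t`. -/
structure IsLHB (K : Set E) (ϑ : ℝ) (F : E → ℝ) : Prop where
  contDiff : ContDiffOn ℝ 3 F (interior K)
  convexOn : ConvexOn ℝ (interior K) F
  hess_posdef : ∀ x ∈ interior K, ∀ v : E, v ≠ 0 → 0 < ⟪Hess F x v, v⟫
  log_hom : ∀ x ∈ interior K, ∀ t : ℝ, 0 < t → F (t • x) = F x - ϑ * Real.log t

/-- `F` has negative curvature: `x ↦ ⟨F'(x), u⟩` is concave on `int K` for every `u ∈ K`. -/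
def NegCurv (K : Set E) (F : E → ℝ) : Prop :=
  ∀ u ∈ K, ConcaveOn ℝ (interior K) (fun x => ⟪gradient F x, u⟫)

open Topology Filter in
lemma aux_grad {F : E → ℝ} {x : E} (hc : ContDiffAt ℝ 3 F x) :
    ContDiffAt ℝ 2 (fun y => gradient F y) x := by
  have h1 : ContDiffAt ℝ 2 (fderiv ℝ F) x := hc.fderiv_right (by norm_num)
  exact ((InnerProductSpace.toDual ℝ E).symm.toContinuousLinearEquiv.contDiff.contDiffAt).comp x h1

lemma aux_hess {F : E → ℝ} {x : E} (hc : ContDiffAt ℝ 3 F x) :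
    ContDiffAt ℝ 1 (fun y => Hess F y) x :=
  (aux_grad hc).fderiv_right (by norm_num)

lemma aux_hasGrad {F : E → ℝ} {x : E} (hc : ContDiffAt ℝ 3 F x) :
    HasFDerivAt (fun y => gradient F y) (Hess F x) x :=
  ((aux_grad hc).differentiableAt (by norm_num)).hasFDerivAt

lemma aux_hasHess {F : E → ℝ} {x : E} (hc : ContDiffAt ℝ 3 F x) :
    HasFDerivAt (fun y => Hess F y) (fderiv ℝ (fun y => Hess F y) x) x :=
  ((aux_hess hc).differentiableAt (by norm_num)).hasFDerivAt

lemma aux_symm {F : E → ℝ} {x : E} (hc : ContDiffAt ℝ 3 F x) (a b : E) :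
    ⟪Hess F x a, b⟫ = ⟪Hess F x b, a⟫ := by
  have key : ∀ a b : E, ⟪Hess F x a, b⟫ = fderiv ℝ (fderiv ℝ F) x a b := by
    intro a b
    have h1 : HasFDerivAt (fun y => ⟪gradient F y, b⟫) _ x :=
      (aux_hasGrad hc).inner ℝ (hasFDerivAt_const b x)
    have h2 : HasFDerivAt (fun y => fderiv ℝ F y b) _ x :=
      (((hc.fderiv_right (m := 2) (by norm_num)).differentiableAt
        (by norm_num)).hasFDerivAt).clm_apply (hasFDerivAt_const b x)
    have h3 : (fun y => ⟪gradient F y, b⟫) = (fun y => fderiv ℝ F y b) := by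
      funext y
      exact inner_gradient_left
    rw [h3] at h1
    have := congrArg (fun L => L a) (h1.unique h2)
    simpa using this
  rw [key, key]
  exact ((hc.of_le (m := 2) (by norm_num)).isSymmSndFDerivAt (by simp)).eq a b

lemma aux_D3_inner {F : E → ℝ} {x : E} (hc : ContDiffAt ℝ 3 F x) (b c : E) :
    HasFDerivAt (fun y => ⟪Hess F y b, c⟫)
      ((innerSL ℝ c).comp ((fderiv ℝ (fun y => Hess F y) x).flip b)) x := by
  have h1 := ((aux_hasHess hc).clm_apply (hasFDerivAt_const b x)).inner ℝ (hasFDerivAt_const c x)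
  refine h1.congr_fderiv ?_
  ext a
  simp [real_inner_comm]

open Topology Filter in
lemma aux_D3_symm {F : E → ℝ} {x : E} (hc : ∀ᶠ y in 𝓝 x, ContDiffAt ℝ 3 F y) (u v : E) :
    ⟪D3 F x u v, v⟫ = ⟪D3 F x v v, u⟫ := by
  have hcx := hc.self_of_nhds
  have e1 : D3 F x u v = D3 F x v u := 
    ((aux_grad hcx).isSymmSndFDerivAt (by simp)).eq u v
  rw [e1]
  have h1 := aux_D3_inner hcx u v
  have h2 := aux_D3_inner hcx v u
  have h3 : (fun y => ⟪Hess F y u, v⟫) =ᶠ[𝓝 x] (fun y => ⟪Hess F y v, u⟫) := by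
    filter_upwards [hc] with y hy using aux_symm hy u v
  have := congrArg (fun L => L v) ((h1.congr_of_eventuallyEq h3.symm).unique h2)
  simpa [D3, real_inner_comm] using this

lemma aux_nonpos {K : Set E} {F : E → ℝ} (hc : ∀ y ∈ interior K, ContDiffAt ℝ 3 F y)
    (hNC : NegCurv K F) {x : E} (hx : x ∈ interior K) {u : E} (hu : u ∈ K) (v : E) :
    ⟪D3 F x v v, u⟫ ≤ 0 := by
  let g : ℝ →ᵃ[ℝ] E := AffineMap.lineMap x (x + v)
  have hg : ∀ t, g t = x + t • v := by
    intro t; simp [g, AffineMap.lineMap_apply, add_comm]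
  have hgd : ∀ t, HasDerivAt (fun t => g t) v t := by
    intro t
    have : (fun t => g t) = fun t : ℝ => x + t • v := funext hg
    rw [this]
    simpa using ((hasDerivAt_id t).smul_const v).const_add x
  have hgc : Continuous (fun t => g t) :=
    continuous_iff_continuousAt.2 fun t => (hgd t).continuousAt
  set S : Set ℝ := g ⁻¹' interior K with hS
  have hSo : IsOpen S := isOpen_interior.preimage hgc
  have h0 : (0:ℝ) ∈ S := by
    change g 0 ∈ interior K
    rw [hg]; simpa using hx
  have hconc := (hNC u hu).comp_affineMap g
  have hd : ∀ t ∈ S, HasDerivAt ((fun x => ⟪gradient F x, u⟫) ∘ g) ⟪Hess F (g t) v, u⟫ t := by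
    intro t ht
    have h1 := ((aux_hasGrad (hc _ ht)).comp_hasDerivAt t (hgd t)).inner ℝ (hasDerivAt_const t u)
    rw [inner_zero_right, zero_add] at h1
    exact h1
  have hanti := hconc.antitoneOn_deriv (fun t ht => (hd t ht).differentiableAt)
  have hanti2 : AntitoneOn (fun t => ⟪Hess F (g t) v, u⟫) S := by
    intro a ha b hb hab
    have := hanti ha hb hab
    rwa [(hd a ha).deriv, (hd b hb).deriv] at this
  have hg0 : g 0 = x := by rw [hg]; simp
  have h2 : HasDerivAt (fun t => ⟪Hess F (g t) v, u⟫) ⟪D3 F x v v, u⟫ 0 := by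
    have h3 := aux_D3_inner (hc _ h0) v u
    have h4 := h3.comp_hasDerivAt (0:ℝ) (hgd 0)
    rw [hg0] at h4
    simpa [D3, real_inner_comm, Function.comp_def] using h4
  have h5 := hanti2.derivWithin_nonpos (x := 0)
  rwa [derivWithin_of_isOpen hSo h0, h2.deriv] at h5

lemma aux_grad_hom {K : Set E} {ϑ : ℝ} {F : E → ℝ} 
    (hcone : ∀ y ∈ interior K, ∀ t : ℝ, 0 < t → t • y ∈ interior K)
    (hc : ∀ y ∈ interior K, ContDiffAt ℝ 3 F y)
    (hl : ∀ x ∈ interior K, ∀ t : ℝ, 0 < t → F (t • x) = F x - ϑ * Real.log t)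
    {y : E} (hy : y ∈ interior K) {t : ℝ} (ht : 0 < t) :
    t • gradient F (t • y) = gradient F y := by
  refine ext_inner_right ℝ fun w => ?_
  rw [real_inner_smul_left, inner_gradient_left, inner_gradient_left]
  have h1 : HasFDerivAt (fun z : E => F (t • z)) _ y :=
    ((hc _ (hcone y hy t ht)).differentiableAt (by norm_num)).hasFDerivAt.comp y
      ((hasFDerivAt_id y).const_smul t)
  have h2 := (((hc _ hy).differentiableAt (by norm_num)).hasFDerivAt).sub_const (ϑ * Real.log t)
  have h3 : (fun z : E => F (t • z)) =ᶠ[nhds y] fun z => F z - ϑ * Real.log t := by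
    filter_upwards [isOpen_interior.mem_nhds hy] with z hz using hl z hz t ht
  have := congrArg (fun L => L w) (h1.unique (h2.congr_of_eventuallyEq h3))
  simpa using this

lemma aux_hess_hom {K : Set E} {ϑ : ℝ} {F : E → ℝ} 
    (hcone : ∀ y ∈ interior K, ∀ t : ℝ, 0 < t → t • y ∈ interior K)
    (hc : ∀ y ∈ interior K, ContDiffAt ℝ 3 F y)
    (hl : ∀ x ∈ interior K, ∀ t : ℝ, 0 < t → F (t • x) = F x - ϑ * Real.log t)
    {y : E} (hy : y ∈ interior K) {t : ℝ} (ht : 0 < t) (w : E) :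
    t ^ 2 * ⟪Hess F (t • y) w, w⟫ = ⟪Hess F y w, w⟫ := by
  have h1 : HasFDerivAt (fun z : E => t • gradient F (t • z)) _ y :=
    ((aux_hasGrad (hc _ (hcone y hy t ht))).comp y ((hasFDerivAt_id y).const_smul t)).const_smul t
  have h3 : (fun z : E => t • gradient F (t • z)) =ᶠ[nhds y] fun z => gradient F z := by
    filter_upwards [isOpen_interior.mem_nhds hy] with z hz using aux_grad_hom hcone hc hl hz ht
  have := congrArg (fun L => ⟪L w, w⟫) (h1.unique ((aux_hasGrad (hc _ hy)).congr_of_eventuallyEq h3))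
  simp [real_inner_smul_left] at this
  rw [← this]; ring

lemma aux_D3_x {K : Set E} {ϑ : ℝ} {F : E → ℝ} 
    (hcone : ∀ y ∈ interior K, ∀ t : ℝ, 0 < t → t • y ∈ interior K)
    (hc : ∀ y ∈ interior K, ContDiffAt ℝ 3 F y)
    (hl : ∀ x ∈ interior K, ∀ t : ℝ, 0 < t → F (t • x) = F x - ϑ * Real.log t)
    {x : E} (hx : x ∈ interior K) (w : E) :
    ⟪D3 F x x w, w⟫ = -2 * ⟪Hess F x w, w⟫ := by
  have hsm : HasDerivAt (fun t : ℝ => t • x) x 1 := by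
    simpa using (hasDerivAt_id (1:ℝ)).smul_const x
  have hcx : ContDiffAt ℝ 3 F ((1:ℝ) • x) := by simpa using hc x hx
  have h0 := (aux_D3_inner hcx w w).comp_hasDerivAt (1:ℝ) hsm
  have h1 : HasDerivAt (fun t : ℝ => ⟪Hess F (t • x) w, w⟫) _ 1 := h0
  have h2 := ((hasDerivAt_id (1:ℝ)).pow 2).mul h1
  have h3 : (fun t : ℝ => ⟪Hess F x w, w⟫) =ᶠ[nhds 1] 
      (id ^ 2 * fun t : ℝ => ⟪Hess F (t • x) w, w⟫) := by
    filter_upwards [lt_mem_nhds (zero_lt_one' ℝ)] with t ht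
    exact (aux_hess_hom hcone hc hl hx ht w).symm
  have := (h2.congr_of_eventuallyEq h3).unique (hasDerivAt_const (1:ℝ) _)
  simp [real_inner_comm] at this
  simp only [D3]
  rw [real_inner_comm] at this
  rw [real_inner_comm] 
  linarith

lemma aux_main {K : Set E} {ϑ : ℝ} {F : E → ℝ}
    (hK : IsRegularCone K) (hF : IsLHB K ϑ F) (hNC : NegCurv K F)
    {x : E} (hx : x ∈ interior K) (h v : E) :
    -2 * mink K x h * ⟪Hess F x v, v⟫ ≤ ⟪D3 F x h v, v⟫ := by
  obtain ⟨-, -, hsm, -, -⟩ := hK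
  have hc : ∀ y ∈ interior K, ContDiffAt ℝ 3 F y := fun y hy =>
    hF.contDiff.contDiffAt (isOpen_interior.mem_nhds hy)
  have hcone : ∀ y ∈ interior K, ∀ t : ℝ, 0 < t → t • y ∈ interior K := by
    intro y hy t ht
    rw [mem_interior_iff_mem_nhds] at hy ⊢
    have : ContinuousAt (fun z : E => t⁻¹ • z) (t • y) := by fun_prop
    have h2 := this.preimage_mem_nhds (t := K) (by simpa [smul_smul, ht.ne'] using hy)
    filter_upwards [h2] with z hz
    have := hsm _ hz t ht.le
    simpa [smul_smul, ht.ne'] using this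
  by_cases hv : v = 0
  · subst hv; simp
  have hpos := hF.hess_posdef x hx v hv
  have hev : ∀ᶠ y in nhds x, ContDiffAt ℝ 3 F y := by
    filter_upwards [isOpen_interior.mem_nhds hx] with y hy using hc y hy
  have hne : {β : ℝ | 0 ≤ β ∧ β • x - h ∈ K}.Nonempty := by
    have h1 : ContinuousAt (fun s : ℝ => x - s • h) 0 := by fun_prop
    have h2 := h1.preimage_mem_nhds (t := K) 
      (by simpa using mem_interior_iff_mem_nhds.1 hx)
    obtain ⟨ε, hε, hb⟩ := Metric.mem_nhds_iff.1 h2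
    have h3 : x - (ε / 2) • h ∈ K := hb (by simp [abs_of_pos hε, hε])
    refine ⟨(ε / 2)⁻¹, by positivity, ?_⟩
    have h4 := hsm _ h3 (ε / 2)⁻¹ (by positivity)
    rwa [smul_sub, smul_smul, inv_mul_cancel₀ (by positivity), one_smul] at h4
  have hle : -⟪D3 F x h v, v⟫ / (2 * ⟪Hess F x v, v⟫) ≤ mink K x h := by
    refine le_csInf hne ?_
    rintro β ⟨-, hβ⟩
    have h1 := aux_nonpos hc hNC hx hβ v
    rw [← aux_D3_symm hev] at h1
    have h2 : D3 F x (β • x - h) v = β • D3 F x x v - D3 F x h v := by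
      simp [D3]
    rw [h2, inner_sub_left, real_inner_smul_left, aux_D3_x hcone hc hF.log_hom hx] at h1
    rw [div_le_iff₀ (by positivity)]
    linarith
  rw [div_le_iff₀ (by positivity)] at hle
  linarith

/-- For a logarithmically homogeneous barrier `F` with negative curvature on a
regular cone `K`, for all `x ∈ int K` and all `h`,
`−2 σₓ(h) F''(x) ⪯ F'''(x;h) ⪯ 2 σₓ(−h) F''(x)` (as symmetric bilinear forms,
i.e. after evaluating at an arbitrary `v`). -/
theorem stmt1 {n : ℕ} (K : Set (EuclideanSpace ℝ (Fin n))) (ϑ : ℝ)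
    (F : EuclideanSpace ℝ (Fin n) → ℝ)
    (hK : IsRegularCone K) (hF : IsLHB K ϑ F) (hNC : NegCurv K F)
    (x : EuclideanSpace ℝ (Fin n)) (hx : x ∈ interior K)
    (h v : EuclideanSpace ℝ (Fin n)) :
    -2 * mink K x h * ⟪Hess F x v, v⟫ ≤ ⟪D3 F x h v, v⟫ ∧
    ⟪D3 F x h v, v⟫ ≤ 2 * mink K x (-h) * ⟪Hess F x v, v⟫ := by
  refine ⟨aux_main hK hF hNC hx h v, ?_⟩
  have h1 := aux_main hK hF hNC hx (-h) v
  have h2 : D3 F x (-h) v = - D3 F x h v := by simp [D3]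
  rw [h2, inner_neg_left] at h1
  linarith
end
end

section
/- Let F be a logarithmically homogeneous barrier with negative curvature for a regular cone K ⊂ ℝⁿ. Then for all x, y ∈ int K, (1/(1+σₓ(y−x))²)·F''(x) ⪯ F''(y) ⪯ (1/(1−σₓ(x−y))²)·F''(x). -/
open scoped RealInnerProductSpace
open Set

noncomputable section

variable {E : Type*} [NormedAddCommGroup E] [InnerProductSpace ℝ E] [CompleteSpace E]

theorem cone_add {K : Set E} (hK : IsRegularCone K) {x u : E} (hx : x ∈ K) (hu : u ∈ K) :
    x + u ∈ K := by
  obtain ⟨_, hc, hs, _, _⟩ := hK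
  have h := hs _ (hc hx hu (by norm_num : (0:ℝ) ≤ 1/2) (by norm_num : (0:ℝ) ≤ 1/2) (by norm_num)) 2
    (by norm_num)
  rw [smul_add, smul_smul, smul_smul] at h
  norm_num at h
  exact h

theorem int_add {K : Set E} (hK : IsRegularCone K) {x u : E} (hx : x ∈ interior K) (hu : u ∈ K) :
    x + u ∈ interior K := by
  have ho : IsOpen {z : E | z - u ∈ interior K} :=
    isOpen_interior.preimage (continuous_id.sub continuous_const)
  refine interior_maximal ?_ ho ?_
  · intro z hz
    have := cone_add hK (interior_subset hz) hu
    simpa using this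
  · simpa using hx

theorem int_smul {K : Set E} (hK : IsRegularCone K) {x : E} (hx : x ∈ interior K) {r : ℝ}
    (hr : 0 < r) : r • x ∈ interior K := by
  have ho : IsOpen {z : E | r⁻¹ • z ∈ interior K} :=
    isOpen_interior.preimage (continuous_id.const_smul r⁻¹)
  refine interior_maximal ?_ ho ?_
  · intro z hz
    have := hK.2.2.1 _ (interior_subset hz) r hr.le
    rwa [smul_smul, mul_inv_cancel₀ hr.ne', one_smul] at this
  · show r⁻¹ • r • x ∈ interior K
    rwa [smul_smul, inv_mul_cancel₀ hr.ne', one_smul]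

theorem lhb_grad {K : Set E} {ϑ : ℝ} {F : E → ℝ} (hF : IsLHB K ϑ F) {z : E}
    (hz : z ∈ interior K) : HasGradientAt F (gradient F z) z := by
  have h := hF.contDiff.contDiffAt (isOpen_interior.mem_nhds hz)
  exact (h.differentiableAt (by norm_num)).hasGradientAt

theorem lhb_hess {K : Set E} {ϑ : ℝ} {F : E → ℝ} (hF : IsLHB K ϑ F) {z : E}
    (hz : z ∈ interior K) : HasFDerivAt (fun y => gradient F y) (Hess F z) z := by
  have h := hF.contDiff.contDiffAt (isOpen_interior.mem_nhds hz)
  have h2 : DifferentiableAt ℝ (fderiv ℝ F) z :=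
    (h.fderiv_right (m := 2) (by norm_num)).differentiableAt (by norm_num)
  have h3 : DifferentiableAt ℝ (fun y => gradient F y) z :=
    ((InnerProductSpace.toDual ℝ E).symm.toContinuousLinearEquiv.differentiableAt).comp z h2
  exact h3.hasFDerivAt

/-- derivative along a line -/
theorem lhb_line {K : Set E} {ϑ : ℝ} {F : E → ℝ} (hF : IsLHB K ϑ F) {z w : E} {t : ℝ}
    (hz : z + t • w ∈ interior K) :
    HasDerivAt (fun s : ℝ => F (z + s • w)) ⟪gradient F (z + t • w), w⟫ t := by
  have h1 := (lhb_grad hF hz).hasFDerivAt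
  have h2 : HasDerivAt (fun s : ℝ => z + s • w) w t := by
    simpa using ((hasDerivAt_id t).smul_const w).const_add z
  have := h1.comp_hasDerivAt t h2
  rw [InnerProductSpace.toDual_apply_apply] at this
  exact this

theorem ev_int {K : Set E} {z : E} (hz : z ∈ interior K) (w : E) :
    ∀ᶠ t : ℝ in nhds 0, z + t • w ∈ interior K := by
  have hc : ContinuousAt (fun s : ℝ => z + s • w) 0 := by fun_prop
  apply hc.eventually_mem
  apply isOpen_interior.mem_nhds
  simpa using hz

def sd (F : E → ℝ) (z v : E) (t : ℝ) : ℝ := F (z + t • v) + F (z + t • (-v)) - 2 * F z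

theorem sd_lim {K : Set E} {ϑ : ℝ} {F : E → ℝ} (hF : IsLHB K ϑ F) {z : E}
    (hz : z ∈ interior K) (v : E) :
    Filter.Tendsto (fun t => sd F z v t / t ^ 2) (nhdsWithin 0 (Ioi 0))
      (nhds ⟪Hess F z v, v⟫) := by
  have e1 := ev_int hz v
  have e2 := ev_int hz (-v)
  have hle : nhdsWithin (0:ℝ) (Ioi 0) ≤ nhds 0 := nhdsWithin_le_nhds
  have d1 : ∀ᶠ t in nhds (0:ℝ), HasDerivAt (sd F z v)
      (⟪gradient F (z + t • v), v⟫ + ⟪gradient F (z + t • (-v)), -v⟫) t := by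
    filter_upwards [e1, e2] with t h1 h2
    exact ((lhb_line hF h1).add (lhb_line hF h2)).sub_const _
  have hsd0 : sd F z v 0 = 0 := by simp [sd]; ring
  have hc0 : Filter.Tendsto (sd F z v) (nhdsWithin 0 (Ioi 0)) (nhds 0) := by
    have := d1.self_of_nhds.continuousAt.tendsto
    rw [hsd0] at this
    exact this.mono_left hle
  have hq0 : Filter.Tendsto (fun t : ℝ => t ^ 2) (nhdsWithin 0 (Ioi 0)) (nhds 0) := by
    have : ContinuousAt (fun t : ℝ => t ^ 2) 0 := by fun_prop
    have := this.tendsto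
    simp only [ne_eq, OfNat.ofNat_ne_zero, not_false_eq_true, zero_pow] at this
    exact this.mono_left hle
  refine HasDerivAt.lhopital_zero_nhdsGT (f' := fun t =>
      (⟪gradient F (z + t • v), v⟫ + ⟪gradient F (z + t • (-v)), -v⟫)) (g' := fun t => 2 * t)
      (d1.filter_mono hle) ?_ ?_ hc0 hq0 ?_
  · refine Filter.Eventually.of_forall fun t => ?_
    simpa using hasDerivAt_pow 2 t
  · filter_upwards [self_mem_nhdsWithin] with t ht
    have : (0:ℝ) < t := ht
    positivity
  · have hl : ∀ w : E, HasDerivAt (fun t : ℝ => ⟪gradient F (z + t • w), w⟫) ⟪Hess F z w, w⟫ 0 := by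
      intro w
      have h2 : HasDerivAt (fun s : ℝ => z + s • w) w 0 := by
        simpa using ((hasDerivAt_id (0:ℝ)).smul_const w).const_add z
      have h1 : HasFDerivAt (fun y => gradient F y) (Hess F z) (z + (0:ℝ) • w) := by
        simpa using lhb_hess hF hz
      have h3 := h1.comp_hasDerivAt (0:ℝ) h2
      simpa using h3.inner ℝ (hasDerivAt_const (0:ℝ) w)
    have h4 := ((hl v).add (hl (-v))).tendsto_slope_zero_right
    have h5 := h4.const_mul (1/2)
    have e : (1/2:ℝ) * (⟪Hess F z v, v⟫ + ⟪Hess F z (-v), -v⟫) = ⟪Hess F z v, v⟫ := by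
      simp; ring
    rw [e] at h5
    refine h5.congr' ?_
    filter_upwards [self_mem_nhdsWithin] with t ht
    have : t ≠ 0 := ne_of_gt ht
    simp [inner_neg_right]
    field_simp

theorem sd_mono {K : Set E} {ϑ : ℝ} {F : E → ℝ} (hK : IsRegularCone K) (hF : IsLHB K ϑ F)
    (hNC : NegCurv K F) {x u v : E} (hx : x ∈ interior K) (hu : u ∈ K) {t : ℝ}
    (h1 : x + t • v ∈ interior K) (h2 : x + t • (-v) ∈ interior K) :
    sd F (x + u) v t ≤ sd F x v t := by
  have hin : ∀ z ∈ interior K, ∀ s : ℝ, 0 ≤ s → z + s • u ∈ interior K := fun z hz s hs =>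
    int_add hK hz (hK.2.2.1 u hu s hs)
  let φ : ℝ → ℝ := fun s => F ((x + t • v) + s • u) + F ((x + t • (-v)) + s • u)
    - 2 * F (x + s • u)
  have hd : ∀ s : ℝ, 0 ≤ s → HasDerivAt φ (⟪gradient F ((x + t • v) + s • u), u⟫
      + ⟪gradient F ((x + t • (-v)) + s • u), u⟫ - 2 * ⟪gradient F (x + s • u), u⟫) s := by
    intro s hs
    exact ((lhb_line hF (hin _ h1 s hs)).add (lhb_line hF (hin _ h2 s hs))).sub
      ((lhb_line hF (hin _ hx s hs)).const_mul 2)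
  have ha : AntitoneOn φ (Icc 0 1) := by
    apply antitoneOn_of_deriv_nonpos (convex_Icc 0 1)
    · exact fun s hs => (hd s hs.1).continuousAt.continuousWithinAt
    · intro s hs
      rw [interior_Icc] at hs
      exact (hd s hs.1.le).differentiableAt.differentiableWithinAt
    · intro s hs
      rw [interior_Icc] at hs
      rw [(hd s hs.1.le).deriv]
      have hcc := (hNC u hu).2 (hin _ h1 s hs.1.le) (hin _ h2 s hs.1.le)
        (by norm_num : (0:ℝ) ≤ 1/2) (by norm_num : (0:ℝ) ≤ 1/2) (by norm_num)
      have e : (1/2:ℝ) • ((x + t • v) + s • u) + (1/2:ℝ) • ((x + t • (-v)) + s • u)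
          = x + s • u := by module
      simp only [e, smul_eq_mul] at hcc
      linarith
  have := ha (left_mem_Icc.2 zero_le_one) (right_mem_Icc.2 zero_le_one) zero_le_one
  simp only [φ, one_smul, zero_smul, add_zero] at this
  unfold sd
  rw [add_right_comm x u, add_right_comm x u]
  exact this

theorem hess_mono {K : Set E} {ϑ : ℝ} {F : E → ℝ} (hK : IsRegularCone K) (hF : IsLHB K ϑ F)
    (hNC : NegCurv K F) {x u : E} (v : E) (hx : x ∈ interior K) (hu : u ∈ K) :
    ⟪Hess F (x + u) v, v⟫ ≤ ⟪Hess F x v, v⟫ := by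
  refine le_of_tendsto_of_tendsto (sd_lim hF (int_add hK hx hu) v) (sd_lim hF hx v) ?_
  have hle : nhdsWithin (0:ℝ) (Ioi 0) ≤ nhds 0 := nhdsWithin_le_nhds
  filter_upwards [(ev_int hx v).filter_mono hle, (ev_int hx (-v)).filter_mono hle] with t h1 h2
  have := sd_mono hK hF hNC hx hu h1 h2
  gcongr

theorem hess_hom {K : Set E} {ϑ : ℝ} {F : E → ℝ} (hK : IsRegularCone K) (hF : IsLHB K ϑ F)
    {x : E} (v : E) (hx : x ∈ interior K) {r : ℝ} (hr : 0 < r) :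
    ⟪Hess F (r • x) v, v⟫ = (1 / r ^ 2) * ⟪Hess F x v, v⟫ := by
  have hle : nhdsWithin (0:ℝ) (Ioi 0) ≤ nhds 0 := nhdsWithin_le_nhds
  have hm : Filter.Tendsto (fun t : ℝ => r * t) (nhdsWithin 0 (Ioi 0)) (nhdsWithin 0 (Ioi 0)) := by
    apply tendsto_nhdsWithin_of_tendsto_nhds_of_eventually_within
    · have : ContinuousAt (fun t : ℝ => r * t) 0 := by fun_prop
      have := this.tendsto
      rw [mul_zero] at this
      exact this.mono_left hle
    · filter_upwards [self_mem_nhdsWithin] with t ht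
      exact mul_pos hr ht
  have hA := (sd_lim hF (int_smul hK hx hr) v).comp hm
  have hB := (sd_lim hF hx v).const_mul (1 / r ^ 2)
  refine tendsto_nhds_unique (hA.congr' ?_) hB
  filter_upwards [(ev_int hx v).filter_mono hle, (ev_int hx (-v)).filter_mono hle,
    self_mem_nhdsWithin] with t h1 h2 ht
  have ht' : t ≠ 0 := ne_of_gt ht
  have e : sd F (r • x) v (r * t) = sd F x v t := by
    unfold sd
    rw [mul_smul, mul_smul, ← smul_add, ← smul_add, hF.log_hom _ h1 r hr, hF.log_hom _ h2 r hr,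
      hF.log_hom _ hx r hr]
    ring
  simp only [Function.comp, e]
  field_simp

theorem hess_nonneg {K : Set E} {ϑ : ℝ} {F : E → ℝ} (hF : IsLHB K ϑ F)
    {x : E} (v : E) (hx : x ∈ interior K) : 0 ≤ ⟪Hess F x v, v⟫ := by
  by_cases h : v = 0
  · simp [h]
  · exact (hF.hess_posdef x hx v h).le

theorem mink_mem {K : Set E} (hK : IsRegularCone K) {x h : E} (hx : x ∈ interior K) :
    0 ≤ mink K x h ∧ mink K x h • x - h ∈ K := by
  have hcl : IsClosed {β : ℝ | 0 ≤ β ∧ β • x - h ∈ K} :=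
    (isClosed_Ici (a := (0:ℝ))).inter (hK.1.preimage (by fun_prop : Continuous fun β : ℝ => β • x - h))
  have hne : {β : ℝ | 0 ≤ β ∧ β • x - h ∈ K}.Nonempty := by
    have hle : nhdsWithin (0:ℝ) (Ioi 0) ≤ nhds 0 := nhdsWithin_le_nhds
    obtain ⟨t, ht, ht0⟩ := (((ev_int hx (-h)).filter_mono hle).and self_mem_nhdsWithin).exists
    have ht0 : (0:ℝ) < t := ht0
    refine ⟨t⁻¹, by positivity, ?_⟩
    have := hK.2.2.1 _ (interior_subset ht) t⁻¹ (by positivity)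
    rw [smul_add, smul_smul, inv_mul_cancel₀ ht0.ne', one_smul] at this
    simpa [sub_eq_add_neg] using this
  exact hcl.csInf_mem hne ⟨0, fun β hβ => hβ.1⟩

theorem mink_lt {K : Set E} (hK : IsRegularCone K) {x y : E} (hy : y ∈ interior K) :
    mink K x (x - y) < 1 := by
  have hle : nhdsWithin (0:ℝ) (Ioi 0) ≤ nhds 0 := nhdsWithin_le_nhds
  obtain ⟨t, ht, ht0, ht1⟩ := (((ev_int hy (-x)).filter_mono hle).and
    (Filter.Eventually.and (show ∀ᶠ t : ℝ in nhdsWithin 0 (Ioi 0), t ∈ Ioi (0:ℝ) from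
      self_mem_nhdsWithin) ((gt_mem_nhds (zero_lt_one (α := ℝ))).filter_mono hle))).exists
  have ht0 : (0:ℝ) < t := ht0
  have : mink K x (x - y) ≤ 1 - t := by
    refine csInf_le ⟨0, fun β hβ => hβ.1⟩ ⟨by linarith, ?_⟩
    have e : (1 - t) • x - (x - y) = y + t • (-x) := by module
    rw [e]
    exact interior_subset ht
  linarith

/-- For a logarithmically homogeneous barrier `F` with negative curvature on a
regular cone `K`, for all `x, y ∈ int K`,
`(1/(1+σₓ(y−x))²) F''(x) ⪯ F''(y) ⪯ (1/(1−σₓ(x−y))²) F''(x)` (as quadratic forms). -/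
theorem stmt2 {n : ℕ} (K : Set (EuclideanSpace ℝ (Fin n))) (ϑ : ℝ)
    (F : EuclideanSpace ℝ (Fin n) → ℝ)
    (hK : IsRegularCone K) (hF : IsLHB K ϑ F) (hNC : NegCurv K F)
    (x : EuclideanSpace ℝ (Fin n)) (hx : x ∈ interior K)
    (y : EuclideanSpace ℝ (Fin n)) (hy : y ∈ interior K)
    (v : EuclideanSpace ℝ (Fin n)) :
    (1 / (1 + mink K x (y - x))^2) * ⟪Hess F x v, v⟫ ≤ ⟪Hess F y v, v⟫ ∧
    ⟪Hess F y v, v⟫ ≤ (1 / (1 - mink K x (x - y))^2) * ⟪Hess F x v, v⟫ := by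
  constructor
  · obtain ⟨h0, h1⟩ := mink_mem hK (h := y - x) hx
    have hr : 0 < 1 + mink K x (y - x) := by linarith
    rw [← hess_hom hK hF v hx hr]
    have e : (1 + mink K x (y - x)) • x = y + (mink K x (y - x) • x - (y - x)) := by module
    rw [e]
    exact hess_mono hK hF hNC v hy h1
  · obtain ⟨h0, h1⟩ := mink_mem hK (h := x - y) hx
    have hr : 0 < 1 - mink K x (x - y) := by linarith [mink_lt hK (x := x) hy]
    rw [← hess_hom hK hF v hx hr]
    have e : y = (1 - mink K x (x - y)) • x + (mink K x (x - y) • x - (x - y)) := by module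
    have := hess_mono hK hF hNC v (int_smul hK hx hr) h1
    rwa [← e] at this
end
end

section
/- Let F be a logarithmically homogeneous barrier with negative curvature for a regular cone K ⊂ ℝⁿ. Then for all x, y ∈ int K, ‖y−x‖ₓ²/(1+σₓ(y−x)) ≤ ⟨F'(y) − F'(x), y − x⟩ ≤ ‖y−x‖ₓ²/(1−σₓ(x−y)). -/
open scoped RealInnerProductSpace
open Set

noncomputable section

variable {E : Type*} [NormedAddCommGroup E] [InnerProductSpace ℝ E] [CompleteSpace E]

/-- Minkowski gauge is attained. -/
theorem aux_mink_mem {K : Set E} (hK : IsRegularCone K) {x : E} (hx : x ∈ interior K) (h : E) :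
    0 ≤ mink K x h ∧ mink K x h • x - h ∈ K := by
  obtain ⟨hcl, hconv, hcone, -, -⟩ := hK
  have hne : {β : ℝ | 0 ≤ β ∧ β • x - h ∈ K}.Nonempty := by
    have hc : Continuous (fun ε : ℝ => x - ε • h) := by fun_prop
    have hev : ∀ᶠ ε : ℝ in nhds 0, x - ε • h ∈ interior K :=
      hc.continuousAt.eventually_mem (isOpen_interior.mem_nhds (by simpa using hx))
    obtain ⟨δ, hδ, hb⟩ := Metric.eventually_nhds_iff.1 hev
    have h1 : x - (δ / 2) • h ∈ K := interior_subset (hb (by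
      rw [Real.dist_eq, sub_zero, abs_of_pos (by positivity)]; linarith))
    refine ⟨(δ / 2)⁻¹, by positivity, ?_⟩
    have h2 := hcone _ h1 (δ / 2)⁻¹ (by positivity)
    rwa [smul_sub, smul_smul, inv_mul_cancel₀ (by positivity), one_smul] at h2
  have hclosed : IsClosed {β : ℝ | 0 ≤ β ∧ β • x - h ∈ K} := by
    have hc : Continuous (fun β : ℝ => β • x - h) := by fun_prop
    exact (isClosed_le continuous_const continuous_id).inter (hcl.preimage hc)
  exact hclosed.csInf_mem hne ⟨0, fun b hb => hb.1⟩

theorem aux_mink_lt {K : Set E} {x y : E} (hy : y ∈ interior K) :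
    mink K x (x - y) < 1 := by
  have hc : Continuous (fun ε : ℝ => y - ε • x) := by fun_prop
  have hev : ∀ᶠ ε : ℝ in nhds 0, y - ε • x ∈ interior K :=
    hc.continuousAt.eventually_mem (isOpen_interior.mem_nhds (by simpa using hy))
  obtain ⟨δ, hδ, hb⟩ := Metric.eventually_nhds_iff.1 hev
  have hm : 0 < min (δ / 2) 1 := by positivity
  have h1 : y - (min (δ / 2) 1) • x ∈ K := interior_subset (hb (by
    rw [Real.dist_eq, sub_zero, abs_of_pos hm]
    have := min_le_left (δ / 2) 1
    linarith))
  have h2 : mink K x (x - y) ≤ 1 - min (δ / 2) 1 := by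
    apply csInf_le ⟨0, fun b hb => hb.1⟩
    refine ⟨by linarith [min_le_right (δ / 2) 1], ?_⟩
    convert h1 using 1
    rw [sub_smul, one_smul]; abel
  linarith

theorem aux_diff {K : Set E} {ϑ : ℝ} {F : E → ℝ} (hF : IsLHB K ϑ F) {x : E}
    (hx : x ∈ interior K) :
    DifferentiableAt ℝ F x ∧ HasFDerivAt (fun y => gradient F y) (Hess F x) x := by
  have h3 : ContDiffAt ℝ 3 F x := hF.contDiff.contDiffAt (isOpen_interior.mem_nhds hx)
  refine ⟨h3.differentiableAt (by norm_num), ?_⟩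
  have h2 : ContDiffAt ℝ 2 (fderiv ℝ F) x := h3.fderiv_right (by norm_num)
  have h1 : DifferentiableAt ℝ (fderiv ℝ F) x := h2.differentiableAt (by norm_num)
  have : DifferentiableAt ℝ (fun y => gradient F y) x :=
    ((InnerProductSpace.toDual ℝ E).symm.toContinuousLinearEquiv.differentiableAt).comp x h1
  exact this.hasFDerivAt

theorem aux_euler {K : Set E} {ϑ : ℝ} {F : E → ℝ} (hF : IsLHB K ϑ F) {x : E}
    (hx : x ∈ interior K) : ⟪gradient F x, x⟫ = -ϑ := by
  have hg := (aux_diff hF hx).1.hasGradientAt.hasFDerivAt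
  have hl : HasDerivAt (fun t : ℝ => t • x) x 1 := by
    simpa using (hasDerivAt_id (1 : ℝ)).smul_const x
  have h1 : HasDerivAt (fun t : ℝ => F (t • x)) ⟪gradient F x, x⟫ 1 := by
    have := HasFDerivAt.comp_hasDerivAt_of_eq (1 : ℝ) hg hl (by simp)
    exact this
  have h2 : HasDerivAt (fun t : ℝ => F x - ϑ * Real.log t) (-ϑ) 1 := by
    simpa using ((Real.hasDerivAt_log (one_ne_zero)).const_mul ϑ).const_sub (F x)
  have h3 : (fun t : ℝ => F (t • x)) =ᶠ[nhds 1] (fun t : ℝ => F x - ϑ * Real.log t) := by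
    filter_upwards [lt_mem_nhds (zero_lt_one (α := ℝ))] with t ht
    exact hF.log_hom x hx t ht
  exact h1.unique (h2.congr_of_eventuallyEq h3)

theorem aux_euler2 {K : Set E} {ϑ : ℝ} {F : E → ℝ} (hF : IsLHB K ϑ F) {x : E}
    (hx : x ∈ interior K) (h : E) : ⟪Hess F x h, x⟫ = -⟪gradient F x, h⟫ := by
  have h1 := (aux_diff hF hx).2.inner ℝ (hasFDerivAt_id x)
  have h2 : (fun z => ⟪gradient F z, id z⟫) =ᶠ[nhds x] fun _ => -ϑ := by
    filter_upwards [isOpen_interior.mem_nhds hx] with z hz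
    exact aux_euler hF hz
  have h3 := h1.unique ((hasFDerivAt_const (-ϑ) x).congr_of_eventuallyEq h2)
  have h4 := congrArg (fun L => L h) h3
  simp at h4
  simp
  linarith

theorem aux_tangent {K : Set E} {ϑ : ℝ} {F : E → ℝ} (hF : IsLHB K ϑ F)
    (hNC : NegCurv K F) {x y u : E} (hx : x ∈ interior K) (hy : y ∈ interior K) (hu : u ∈ K) :
    ⟪gradient F y, u⟫ ≤ ⟪gradient F x, u⟫ + ⟪Hess F x (y - x), u⟫ := by
  have hl : HasDerivAt (AffineMap.lineMap (k := ℝ) x y) (y - x) (0 : ℝ) :=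
    AffineMap.hasDerivAt_lineMap
  have h0 := HasFDerivAt.comp_hasDerivAt_of_eq (0 : ℝ) (aux_diff hF hx).2 hl (by simp)
  have h1 := h0.inner ℝ (hasDerivAt_const (0 : ℝ) u)
  have hc := (hNC u hu).comp_affineMap (AffineMap.lineMap (k := ℝ) x y)
  have h2 := hc.slope_le_of_hasDerivAt (x := 0) (y := 1) (by simpa using hx)
    (by simpa using hy) one_pos h1
  simp [slope] at h2
  simp
  linarith

/-- For a logarithmically homogeneous barrier `F` with negative curvature on a
regular cone `K`, for all `x, y ∈ int K`,
`‖y−x‖ₓ²/(1+σₓ(y−x)) ≤ ⟨F'(y) − F'(x), y − x⟩ ≤ ‖y−x‖ₓ²/(1−σₓ(x−y))`. -/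
theorem stmt3 {n : ℕ} (K : Set (EuclideanSpace ℝ (Fin n))) (ϑ : ℝ)
    (F : EuclideanSpace ℝ (Fin n) → ℝ)
    (hK : IsRegularCone K) (hF : IsLHB K ϑ F) (hNC : NegCurv K F)
    (x : EuclideanSpace ℝ (Fin n)) (hx : x ∈ interior K)
    (y : EuclideanSpace ℝ (Fin n)) (hy : y ∈ interior K) :
    localNorm F x (y - x) ^ 2 / (1 + mink K x (y - x)) ≤
        ⟪gradient F y - gradient F x, y - x⟫ ∧
    ⟪gradient F y - gradient F x, y - x⟫ ≤
        localNorm F x (y - x) ^ 2 / (1 - mink K x (x - y)) := by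
  set h := y - x with hh
  obtain ⟨a0, ha⟩ := aux_mink_mem hK hx h
  obtain ⟨b0, hb⟩ := aux_mink_mem hK hx (x - y)
  have hb1 := aux_mink_lt (K := K) (x := x) hy
  set a := mink K x h
  set b := mink K x (x - y)
  have hN : localNorm F x h ^ 2 = ⟪Hess F x h, h⟫ := by
    apply Real.sq_sqrt
    by_cases h0 : h = 0
    · simp [h0]
    · exact (hF.hess_posdef x hx h h0).le
  have e1 := aux_euler hF hx
  have e2 := aux_euler hF hy
  have e3 := aux_euler2 hF hx h
  have e4 : ⟪gradient F y, y⟫ = ⟪gradient F y, x⟫ + ⟪gradient F y, h⟫ := by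
    rw [← inner_add_right, hh]; simp
  have t1 := aux_tangent hF hNC hx hy ha
  have t2 := aux_tangent hF hNC hx hy hb
  have hxy : x - y = -h := by rw [hh]; abel
  rw [hxy] at t2
  rw [← hh] at t1 t2
  simp only [inner_sub_right, inner_neg_right, inner_smul_right] at t1 t2
  have e5 : ⟪gradient F y, x⟫ = -ϑ - ⟪gradient F y, h⟫ := by linarith
  rw [e1, e3, e5] at t1 t2
  rw [hN, inner_sub_left]
  constructor
  · rw [div_le_iff₀ (by linarith)]
    linarith
  · rw [le_div_iff₀ (by linarith)]
    linarith
end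
end

section
/- Let F be a logarithmically homogeneous barrier with negative curvature for a regular cone K ⊂ ℝⁿ. Then for all x, y ∈ int K, F''(y) ⪯ σ_y(x)²·F''(x). In particular, if y − x ∈ K, then σ_y(x) ≤ 1 and therefore F''(y) ⪯ F''(x). -/
open scoped RealInnerProductSpace
open Set

noncomputable section

variable {E : Type*} [NormedAddCommGroup E] [InnerProductSpace ℝ E] [CompleteSpace E]

theorem aux_add {K : Set E} (hK : IsRegularCone K) {a b : E} (ha : a ∈ K) (hb : b ∈ K) :
    a + b ∈ K := by
  have h := hK.2.1 ha hb (by norm_num : (0:ℝ) ≤ 1/2) (by norm_num : (0:ℝ) ≤ 1/2) (by norm_num)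
  have h2 := hK.2.2.1 _ h 2 (by norm_num)
  rw [smul_add, smul_smul, smul_smul] at h2
  norm_num at h2
  exact h2

open scoped Pointwise in
theorem aux_int_add {K : Set E} (hK : IsRegularCone K) {a b : E} (ha : a ∈ interior K)
    (hb : b ∈ K) : a + b ∈ interior K := by
  have hsub : interior K + K ⊆ K := by
    rintro _ ⟨p, hp, q, hq, rfl⟩
    exact aux_add hK (interior_subset hp) hq
  exact interior_maximal hsub isOpen_interior.add_right (Set.add_mem_add ha hb)

open scoped Pointwise in
theorem aux_int_smul {K : Set E} (hK : IsRegularCone K) {a : E} (ha : a ∈ interior K)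
    {t : ℝ} (ht : 0 < t) : t • a ∈ interior K := by
  have h1 : t • a ∈ t • interior K := Set.smul_mem_smul_set ha
  rw [← interior_smul₀ ht.ne'] at h1
  refine interior_mono ?_ h1
  rintro _ ⟨p, hp, rfl⟩
  exact hK.2.2.1 p hp t ht.le

theorem aux_contDiffAt {K : Set E} {ϑ : ℝ} {F : E → ℝ} (hF : IsLHB K ϑ F) {z : E}
    (hz : z ∈ interior K) : ContDiffAt ℝ 3 F z :=
  hF.contDiff.contDiffAt (isOpen_interior.mem_nhds hz)

theorem aux_diff_s4 {K : Set E} {ϑ : ℝ} {F : E → ℝ} (hF : IsLHB K ϑ F) {z : E}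
    (hz : z ∈ interior K) : DifferentiableAt ℝ F z :=
  (aux_contDiffAt hF hz).differentiableAt (by norm_num)

theorem aux_grad_diff {K : Set E} {ϑ : ℝ} {F : E → ℝ} (hF : IsLHB K ϑ F) {z : E}
    (hz : z ∈ interior K) : DifferentiableAt ℝ (fun y => gradient F y) z := by
  have h : ContDiffAt ℝ 2 (fderiv ℝ F) z :=
    (aux_contDiffAt hF hz).fderiv_right (by norm_num)
  have h2 : DifferentiableAt ℝ (fderiv ℝ F) z := h.differentiableAt (by norm_num)
  exact ((InnerProductSpace.toDual ℝ E).symm.toContinuousLinearEquiv.differentiableAt).comp z h2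

/-- derivative of `F` along a line -/
theorem aux_line {K : Set E} {ϑ : ℝ} {F : E → ℝ} (hF : IsLHB K ϑ F) (z u : E) (t : ℝ)
    (hz : z + t • u ∈ interior K) :
    HasDerivAt (fun t : ℝ => F (z + t • u)) ⟪gradient F (z + t • u), u⟫ t := by
  have h := (aux_diff_s4 hF hz).hasFDerivAt
  have hl : HasDerivAt (fun t : ℝ => z + t • u) u t := by
    simpa using ((hasDerivAt_id t).smul_const u).const_add z
  have := h.comp_hasDerivAt t hl
  rw [inner_gradient_left]
  exact this

theorem aux_concave {K : Set E} {ϑ : ℝ} {F : E → ℝ} (hK : IsRegularCone K)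
    (hF : IsLHB K ϑ F) (hNC : NegCurv K F) {u : E} (hu : u ∈ K) :
    ConcaveOn ℝ (interior K) (fun z => F (z + u) - F z) := by
  refine ⟨hK.2.1.interior, ?_⟩
  intro p hp q hq a b ha hb hab
  have hr := hK.2.1.interior hp hq ha hb hab
  have hmem : ∀ z ∈ interior K, ∀ t : ℝ, 0 ≤ t → z + t • u ∈ interior K :=
    fun z hz t ht => aux_int_add hK hz (hK.2.2.1 u hu t ht)
  set r := a • p + b • q with hrdef
  let ψ : ℝ → ℝ := fun t => F (r + t • u) - a * F (p + t • u) - b * F (q + t • u)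
  have hd : ∀ t : ℝ, 0 ≤ t → HasDerivAt ψ (⟪gradient F (r + t • u), u⟫
      - a * ⟪gradient F (p + t • u), u⟫ - b * ⟪gradient F (q + t • u), u⟫) t := fun t ht =>
    ((aux_line hF r u t (hmem r hr t ht)).sub
      ((aux_line hF p u t (hmem p hp t ht)).const_mul a)).sub
      ((aux_line hF q u t (hmem q hq t ht)).const_mul b)
  have hmono : MonotoneOn ψ (Icc 0 1) := by
    apply monotoneOn_of_deriv_nonneg (convex_Icc 0 1)
    · exact fun t ht => (hd t ht.1).continuousAt.continuousWithinAt
    · intro t ht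
      rw [interior_Icc] at ht
      exact (hd t ht.1.le).differentiableAt.differentiableWithinAt
    · intro t ht
      rw [interior_Icc] at ht
      rw [(hd t ht.1.le).deriv]
      have hc := (hNC u hu).2 (hmem p hp t ht.1.le) (hmem q hq t ht.1.le) ha hb hab
      have he : a • (p + t • u) + b • (q + t • u) = r + t • u := by
        have hb' : b = 1 - a := by linarith
        rw [hrdef, hb']
        module
      simp only [he, smul_eq_mul] at hc
      linarith
  have h01 := hmono (left_mem_Icc.2 zero_le_one) (right_mem_Icc.2 zero_le_one) zero_le_one
  simp only [ψ, zero_smul, one_smul, add_zero] at h01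
  simp only [smul_eq_mul]
  linarith

theorem aux_mono {K : Set E} {ϑ : ℝ} {F : E → ℝ} (hK : IsRegularCone K)
    (hF : IsLHB K ϑ F) (hNC : NegCurv K F) {x y : E} (hx : x ∈ interior K)
    (hxy : y - x ∈ K) (v : E) : ⟪Hess F y v, v⟫ ≤ ⟪Hess F x v, v⟫ := by
  obtain ⟨u, rfl⟩ : ∃ u, y = x + u := ⟨y - x, by abel⟩
  have hu : u ∈ K := by simpa using hxy
  have hc := aux_concave hK hF hNC hu
  let S : Set ℝ := {s | x + s • v ∈ interior K}
  let G : ℝ → ℝ := fun s => F (x + u + s • v) - F (x + s • v)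
  let G' : ℝ → ℝ := fun s => ⟪gradient F (x + u + s • v), v⟫ - ⟪gradient F (x + s • v), v⟫
  have hSo : IsOpen S := isOpen_interior.preimage (by fun_prop : Continuous fun s : ℝ => x + s • v)
  have h0 : (0:ℝ) ∈ S := by simpa [S] using hx
  have hmem : ∀ s ∈ S, x + u + s • v ∈ interior K := by
    intro s hs
    have := aux_int_add hK hs hu
    rwa [add_right_comm] at this
  have hcomb : ∀ a b s t : ℝ, a + b = 1 →
      x + (a • s + b • t) • v = a • (x + s • v) + b • (x + t • v) := by
    intro a b s t hab
    have hb' : b = 1 - a := by linarith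
    rw [hb', smul_eq_mul, smul_eq_mul]
    module
  have hG : ConcaveOn ℝ S G := by
    refine ⟨?_, ?_⟩
    · intro s hs t ht a b ha hb hab
      change x + (a • s + b • t) • v ∈ interior K
      rw [hcomb a b s t hab]
      exact hK.2.1.interior hs ht ha hb hab
    · intro s hs t ht a b ha hb hab
      have h := hc.2 hs ht ha hb hab
      have e : ∀ s : ℝ, G s = F (x + s • v + u) - F (x + s • v) := by
        intro s
        simp only [G]
        rw [add_right_comm]
      rw [e, e, e, hcomb a b s t hab]
      exact h
  have hGd : ∀ s ∈ S, HasDerivAt G (G' s) s := fun s hs =>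
    (aux_line hF (x + u) v s (hmem s hs)).sub (aux_line hF x v s hs)
  have hanti : AntitoneOn G' S := by
    have := hG.antitoneOn_deriv (fun s hs => (hGd s hs).differentiableAt)
    exact this.congr (fun s hs => (hGd s hs).deriv)
  have hline : ∀ z ∈ interior K,
      HasDerivAt (fun s : ℝ => ⟪gradient F (z + s • v), v⟫) ⟪Hess F z v, v⟫ 0 := by
    intro z hz
    have hl : HasDerivAt (fun t : ℝ => z + t • v) v 0 := by
      simpa using ((hasDerivAt_id (0:ℝ)).smul_const v).const_add z
    have h1 : HasFDerivAt (fun y => gradient F y) (Hess F z) (z + (0:ℝ) • v) := by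
      rw [zero_smul, add_zero]
      exact (aux_grad_diff hF hz).hasFDerivAt
    have h2 := h1.comp_hasDerivAt (0:ℝ) hl
    simpa using h2.inner ℝ (hasDerivAt_const (0:ℝ) v)
  have hG'' : HasDerivAt G' (⟪Hess F (x + u) v, v⟫ - ⟪Hess F x v, v⟫) 0 :=
    (hline (x + u) (aux_int_add hK hx hu)).sub (hline x hx)
  have h := hanti.derivWithin_nonpos (x := 0)
  rw [derivWithin_of_isOpen hSo h0, hG''.deriv] at h
  linarith

theorem aux_hom {K : Set E} {ϑ : ℝ} {F : E → ℝ} (hK : IsRegularCone K)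
    (hF : IsLHB K ϑ F) {y : E} (hy : y ∈ interior K) {t : ℝ} (ht : 0 < t) (v : E) :
    ⟪Hess F y v, v⟫ = t ^ 2 * ⟪Hess F (t • y) v, v⟫ := by
  have hg : ∀ z ∈ interior K, gradient F z = t • gradient F (t • z) := by
    intro z hz
    have he : (fun w => F (t • w)) =ᶠ[nhds z] fun w => F w - ϑ * Real.log t := by
      filter_upwards [isOpen_interior.mem_nhds hz] with w hw
      exact hF.log_hom w hw t ht
    have h := he.fderiv_eq (𝕜 := ℝ)
    rw [fderiv_sub_const, fderiv_comp_smul] at h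
    simp only [gradient]
    rw [← h, map_smul]
  have he : (fun w => gradient F w) =ᶠ[nhds y] fun w => t • gradient F (t • w) := by
    filter_upwards [isOpen_interior.mem_nhds hy] with w hw
    exact hg w hw
  have h := he.fderiv_eq (𝕜 := ℝ)
  have h1 : HasFDerivAt (fun w => gradient F w) (Hess F (t • y)) (t • y) :=
    (aux_grad_diff hF (aux_int_smul hK hy ht)).hasFDerivAt
  have h2 : HasFDerivAt (fun w => t • gradient F (t • w))
      (t • ((Hess F (t • y)).comp (t • ContinuousLinearMap.id ℝ E))) y :=
    (h1.comp y ((hasFDerivAt_id y).const_smul t)).const_smul t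
  rw [h2.fderiv] at h
  have h3 : Hess F y = t • ((Hess F (t • y)).comp (t • ContinuousLinearMap.id ℝ E)) := h
  rw [h3]
  simp [inner_smul_left]
  ring

theorem aux_mink {K : Set E} (hK : IsRegularCone K) {x y : E} (hy : y ∈ interior K) :
    0 ≤ mink K y x ∧ mink K y x • y - x ∈ K := by
  have hne : {β : ℝ | 0 ≤ β ∧ β • y - x ∈ K}.Nonempty := by
    have hc : Filter.Tendsto (fun s : ℝ => y - s • x) (nhds 0) (nhds y) := by
      have : Continuous fun s : ℝ => y - s • x := by fun_prop
      simpa using this.tendsto 0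
    have h1 : ∀ᶠ s in nhdsWithin (0:ℝ) (Ioi 0), y - s • x ∈ interior K :=
      (hc.mono_left nhdsWithin_le_nhds).eventually (isOpen_interior.mem_nhds hy)
    obtain ⟨s, hs, hs0⟩ := (h1.and self_mem_nhdsWithin).exists
    have hs0 : 0 < s := hs0
    refine ⟨s⁻¹, (inv_pos.2 hs0).le, ?_⟩
    have := hK.2.2.1 _ (interior_subset hs) s⁻¹ (inv_pos.2 hs0).le
    rwa [smul_sub, smul_smul, inv_mul_cancel₀ hs0.ne', one_smul] at this
  have hcl : IsClosed {β : ℝ | 0 ≤ β ∧ β • y - x ∈ K} :=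
    isClosed_Ici.inter (hK.1.preimage (by fun_prop : Continuous fun β : ℝ => β • y - x))
  exact hcl.csInf_mem hne ⟨0, fun β hβ => hβ.1⟩

/-- For a logarithmically homogeneous barrier `F` with negative curvature on a
regular cone `K`, for all `x, y ∈ int K`, `F''(y) ⪯ σ_y(x)² F''(x)`; in particular, if
`y − x ∈ K` then `σ_y(x) ≤ 1` and `F''(y) ⪯ F''(x)` (matrix inequalities as quadratic forms). -/
theorem stmt4 {n : ℕ} (K : Set (EuclideanSpace ℝ (Fin n))) (ϑ : ℝ)
    (F : EuclideanSpace ℝ (Fin n) → ℝ)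
    (hK : IsRegularCone K) (hF : IsLHB K ϑ F) (hNC : NegCurv K F)
    (x : EuclideanSpace ℝ (Fin n)) (hx : x ∈ interior K)
    (y : EuclideanSpace ℝ (Fin n)) (hy : y ∈ interior K) :
    (∀ v, ⟪Hess F y v, v⟫ ≤ (mink K y x)^2 * ⟪Hess F x v, v⟫) ∧
    (y - x ∈ K → mink K y x ≤ 1 ∧ ∀ v, ⟪Hess F y v, v⟫ ≤ ⟪Hess F x v, v⟫) := by
  have hs := aux_mink hK (x := x) hy
  refine ⟨fun v => ?_, fun hyx => ⟨?_, fun v => aux_mono hK hF hNC hx hyx v⟩⟩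
  · rcases hs.1.eq_or_lt with h0 | hpos
    · have h := hs.2
      rw [← h0, zero_smul, zero_sub] at h
      have hx0 := hK.2.2.2.1 x (interior_subset hx) h
      subst hx0
      have hv : v = 0 := by
        have hc : Filter.Tendsto (fun s : ℝ => s • v) (nhds 0) (nhds 0) := by
          have : Continuous fun s : ℝ => s • v := by fun_prop
          simpa using this.tendsto 0
        have hc' : Filter.Tendsto (fun s : ℝ => -(s • v)) (nhds 0) (nhds 0) := by
          simpa using hc.neg
        have h1 : ∀ᶠ s in nhdsWithin (0:ℝ) (Ioi 0), s • v ∈ interior K ∧ -(s • v) ∈ interior K :=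
          ((hc.eventually (isOpen_interior.mem_nhds hx)).and
            (hc'.eventually (isOpen_interior.mem_nhds hx))).filter_mono nhdsWithin_le_nhds
        obtain ⟨s, hs, hs0⟩ := (h1.and self_mem_nhdsWithin).exists
        have hs0 : 0 < s := hs0
        have := hK.2.2.2.1 _ (interior_subset hs.1) (interior_subset hs.2)
        exact (smul_eq_zero.1 this).resolve_left hs0.ne'
      subst hv
      simp
    · rw [aux_hom hK hF hy hpos v]
      exact mul_le_mul_of_nonneg_left (aux_mono hK hF hNC hx hs.2 v) (sq_nonneg _)
  · exact csInf_le ⟨0, fun β hβ => hβ.1⟩ ⟨zero_le_one, by simpa using hyx⟩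
end
end

section
/- Let n ≥ 2, τ_n = √(n/(n−1)), and ρ_n = (τ_n+1)²/(τ_n(τ_n+2)). Then the infimum over all v ∈ ℝⁿ with v_i > 0 for all i of the quantity (min_i v_i)·(Σ_{j=1}^n 1/v_j − n(n−1)/(Σ_{j=1}^n v_j)) equals 1/ρ_n, and it is attained at v = (τ_n+1, …, τ_n+1, 1). -/
open scoped BigOperators

lemma aux_iInf {n : ℕ} (v : Fin n → ℝ) (k : Fin n) (h : ∀ i, v k ≤ v i) : (⨅ i, v i) = v k := by
  haveI : Nonempty (Fin n) := ⟨k⟩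
  exact le_antisymm (ciInf_le (Set.finite_range v).bddBelow k) (le_ciInf h)

lemma aux_val (m : ℕ) (t : ℝ) (ht : 1 < t) (hm : (m : ℝ) * (t ^ 2 - 1) = 1) :
    (⨅ i : Fin (m + 1), (if (i : ℕ) = m then (1 : ℝ) else t + 1)) *
      ((∑ j : Fin (m + 1), 1 / (if (j : ℕ) = m then (1 : ℝ) else t + 1)) -
        ((m : ℝ) + 1) * m / (∑ j : Fin (m + 1), (if (j : ℕ) = m then (1 : ℝ) else t + 1)))
      = 1 - 1 / (t + 1) ^ 2 := by
  have h1 : (⨅ i : Fin (m + 1), (if (i : ℕ) = m then (1 : ℝ) else t + 1)) = 1 := by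
    have := aux_iInf (fun i : Fin (m + 1) => (if (i : ℕ) = m then (1 : ℝ) else t + 1)) (Fin.last m)
      (by intro i; simp only [Fin.val_last, if_true]; split_ifs <;> linarith)
    rw [this]; simp
  have hne : ∀ i : Fin m, (i : ℕ) ≠ m := fun i => i.2.ne
  rw [h1, Fin.sum_univ_castSucc, Fin.sum_univ_castSucc]
  simp only [Fin.val_castSucc, Fin.val_last, if_true, hne, if_false, Finset.sum_const,
    Finset.card_univ, Fintype.card_fin, nsmul_eq_mul]
  have hd : (m : ℝ) * (t + 1) + 1 = m * t * (t + 1) := by linear_combination -hm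
  have hn : (m : ℝ) + 1 = m * t ^ 2 := by linear_combination -hm
  have hm0 : (m : ℝ) ≠ 0 := by rintro h; rw [h] at hm; simp at hm
  have ht0 : t ≠ 0 := by linarith
  have ht1 : t + 1 ≠ 0 := by linarith
  rw [hd, hn]
  field_simp
  linear_combination -hm

lemma aux_real (m t a T R : ℝ) (hm0 : 0 < m) (ht : 1 < t) (hm : m * (t ^ 2 - 1) = 1)
    (ha : 0 < a) (hT : 0 < T) (hR : m ^ 2 ≤ T * R) :
    1 - 1 / (t + 1) ^ 2 ≤ a * ((1 / a + R) - (m + 1) * m / (a + T)) := by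
  have h1 : m ^ 2 / T ≤ R := by rw [div_le_iff₀ hT]; linarith
  have h2 : a * ((1 / a + m ^ 2 / T) - (m + 1) * m / (a + T)) ≤
      a * ((1 / a + R) - (m + 1) * m / (a + T)) := by gcongr
  refine le_trans ?_ h2
  have hs : 0 < t + 1 := by linarith
  have haT : 0 < a + T := by linarith
  have : a * ((1 / a + m ^ 2 / T) - (m + 1) * m / (a + T)) - (1 - 1 / (t + 1) ^ 2)
      = (T - a * m * (t + 1)) ^ 2 / (T * (a + T) * (t + 1) ^ 2) := by
    field_simp
    linear_combination (-T * a) * hm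
  have h6 : 0 ≤ (T - a * m * (t + 1)) ^ 2 / (T * (a + T) * (t + 1) ^ 2) := by positivity
  linarith

lemma aux_lower (m : ℕ) (hm1 : 1 ≤ m) (t : ℝ) (ht : 1 < t) (hm : (m : ℝ) * (t ^ 2 - 1) = 1)
    (v : Fin (m + 1) → ℝ) (hv : ∀ i, 0 < v i) :
    1 - 1 / (t + 1) ^ 2 ≤ (⨅ i, v i) * ((∑ j, 1 / v j) - ((m : ℝ) + 1) * m / (∑ j, v j)) := by
  obtain ⟨k, hk⟩ := Finite.exists_min v
  rw [aux_iInf v k hk, Fin.sum_univ_succAbove _ k, Fin.sum_univ_succAbove _ k]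
  have hm0 : (0 : ℝ) < m := by exact_mod_cast hm1
  haveI : Nonempty (Fin m) := ⟨⟨0, hm1⟩⟩
  apply aux_real m t _ _ _ hm0 ht hm (hv k)
  · exact Finset.sum_pos (fun i _ => hv _) Finset.univ_nonempty
  · have := Finset.sum_sq_le_sum_mul_sum_of_sq_eq_mul (Finset.univ : Finset (Fin m))
      (r := fun _ => (1 : ℝ)) (f := fun i => v (k.succAbove i)) (g := fun i => 1 / v (k.succAbove i))
      (fun i _ => (hv _).le) (fun i _ => (one_div_pos.2 (hv _)).le)
      (fun i _ => by have := (hv (k.succAbove i)).ne'; field_simp)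
    simpa using this

/-- For `n ≥ 2`, `τ_n = √(n/(n−1))`, `ρ_n = (τ_n+1)²/(τ_n(τ_n+2))`, the
infimum over `v ∈ ℝⁿ` with positive components of
`(min_i v_i)(Σ_j 1/v_j − n(n−1)/Σ_j v_j)` equals `1/ρ_n` (stated as `IsLeast`, so the
infimum is attained), and it is attained at `v = (τ_n+1, …, τ_n+1, 1)`. -/
theorem stmt10 (n : ℕ) (hn : 2 ≤ n) :
    let τ : ℝ := Real.sqrt ((n : ℝ) / ((n : ℝ) - 1))
    let ρ : ℝ := (τ + 1)^2 / (τ * (τ + 2))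
    IsLeast {r : ℝ | ∃ v : Fin n → ℝ, (∀ i, 0 < v i) ∧
        r = (⨅ i, v i) * ((∑ j, 1 / v j) - (n : ℝ) * ((n : ℝ) - 1) / (∑ j, v j))}
      (1 / ρ) ∧
    (let v : Fin n → ℝ := fun i => if (i : ℕ) = n - 1 then 1 else τ + 1
     (⨅ i, v i) * ((∑ j, 1 / v j) - (n : ℝ) * ((n : ℝ) - 1) / (∑ j, v j)) = 1 / ρ) := by
  intro τ ρ
  obtain ⟨m, rfl⟩ : ∃ m, n = m + 1 := ⟨n - 1, by omega⟩
  have hm1 : 1 ≤ m := by omega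
  have hm0 : (0 : ℝ) < m := by exact_mod_cast hm1
  have hc : ((m + 1 : ℕ) : ℝ) = m + 1 := by push_cast; rfl
  have hτ2 : τ ^ 2 = ((m : ℝ) + 1) / m := by
    simp only [τ]
    rw [hc, add_sub_cancel_right, Real.sq_sqrt (by positivity)]
  have ht0 : 0 ≤ τ := Real.sqrt_nonneg _
  have hm : (m : ℝ) * (τ ^ 2 - 1) = 1 := by rw [hτ2]; field_simp; ring
  have ht : 1 < τ := by
    by_contra h
    push Not at h
    have : τ ^ 2 ≤ 1 := by nlinarith
    nlinarith
  have hρ : 1 / ρ = 1 - 1 / (τ + 1) ^ 2 := by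
    simp only [ρ]
    have h1 : τ ≠ 0 := by linarith
    have h2 : τ + 1 ≠ 0 := by linarith
    have h3 : τ + 2 ≠ 0 := by linarith
    field_simp
    ring
  clear_value ρ τ
  rw [hρ, hc, add_sub_cancel_right, Nat.add_sub_cancel]
  have hval := aux_val m τ ht hm
  refine ⟨⟨⟨_, ?_, hval.symm⟩, ?_⟩, hval⟩
  · intro i
    split_ifs <;> linarith
  · rintro r ⟨v, hv, rfl⟩
    exact aux_lower m hm1 τ ht hm v hv
end

section
/- Let n ≥ 2 and let F(x) = −Σ_{i=1}^n ln x_i be the logarithmic barrier on ℝⁿ_{++}. Then for all x, s ∈ ℝⁿ_{++}, 1/min_i(x_i s_i) ≤ ρ_n·(Σ_{i=1}^n 1/(x_i s_i) − n(n−1)/(Σ_{i=1}^n x_i s_i)), and ρ_n is the smallest constant for which this holds for all x, s ∈ ℝⁿ_{++}. Equivalently, the complexity measure ξ̌_F = sup over x, s ∈ ℝⁿ_{++} of λ_max^{1/2}(F''(x)F_*''(s))/δ_F(x,s) equals ρ_n, where λ_max^{1/2}(F''(x)F_*''(s)) = 1/min_i(x_i s_i) and δ_F(x,s) = Σ_i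 1/(x_i s_i) − n(n−1)/(Σ_i x_i s_i). -/
open scoped BigOperators

lemma key_id (τ m t k : ℝ) (hτ : 0 < τ) (hm : 0 < m) (ht : 0 < t) (hk : 0 < k)
    (h : k * τ ^ 2 = k + 1) :
    (τ + 1)^2 / (τ * (τ + 2)) * (1 / m + k ^ 2 / (k * t * m) - (k + 1) * k / (m + k * t * m)) - 1 / m
      = k * (t - (1 + τ)) ^ 2 / (τ * (τ + 2) * m * t * (1 + k * t)) := by
  have h1 : 0 < 1 + k * t := by positivity
  have e : m + k * t * m = m * (1 + k * t) := by ring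
  rw [e]
  field_simp
  linear_combination (-t) * h

/-- For the logarithmic barrier `F(x) = −Σ ln xᵢ` on `ℝⁿ₊₊` (`n ≥ 2`):
for all `x, s ∈ ℝⁿ₊₊`,
`1/min_i(xᵢsᵢ) ≤ ρ_n (Σ_i 1/(xᵢsᵢ) − n(n−1)/Σ_i xᵢsᵢ)`, and `ρ_n` is the smallest
constant for which this holds; equivalently, `ξ̌_F = sup λ_max^{1/2}(F''(x)F_*''(s))/δ_F(x,s)
= ρ_n`, where `λ_max^{1/2}(F''(x)F_*''(s)) = 1/min_i(xᵢsᵢ)` and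
`δ_F(x,s) = Σ_i 1/(xᵢsᵢ) − n(n−1)/Σ_i xᵢsᵢ`. -/
theorem stmt11 (n : ℕ) (hn : 2 ≤ n) :
    let τ : ℝ := Real.sqrt ((n : ℝ) / ((n : ℝ) - 1))
    let ρ : ℝ := (τ + 1)^2 / (τ * (τ + 2))
    (∀ x s : Fin n → ℝ, (∀ i, 0 < x i) → (∀ i, 0 < s i) →
      1 / (⨅ i, x i * s i) ≤
        ρ * ((∑ i, 1 / (x i * s i)) - (n : ℝ) * ((n : ℝ) - 1) / (∑ i, x i * s i))) ∧
    (∀ c : ℝ,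
      (∀ x s : Fin n → ℝ, (∀ i, 0 < x i) → (∀ i, 0 < s i) →
        1 / (⨅ i, x i * s i) ≤
          c * ((∑ i, 1 / (x i * s i)) - (n : ℝ) * ((n : ℝ) - 1) / (∑ i, x i * s i))) →
      ρ ≤ c) := by
  intro τ ρ
  have hn2 : (2:ℝ) ≤ n := by exact_mod_cast hn
  have hn1 : (0:ℝ) < (n:ℝ) - 1 := by linarith
  have hτ : 0 < τ := Real.sqrt_pos.mpr (by positivity)
  have hτ2 : ((n:ℝ) - 1) * τ ^ 2 = ((n:ℝ) - 1) + 1 := by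
    have : τ ^ 2 = (n:ℝ) / ((n:ℝ) - 1) := Real.sq_sqrt (by positivity)
    rw [this]; field_simp; ring
  have hρ : 0 < ρ := by positivity
  haveI : Nonempty (Fin n) := ⟨⟨0, by omega⟩⟩
  have hcard : ∀ j : Fin n, ((Finset.univ.erase j).card : ℝ) = (n:ℝ) - 1 := by
    intro j
    rw [Finset.card_erase_of_mem (Finset.mem_univ j), Finset.card_univ, Fintype.card_fin,
      Nat.cast_sub (by omega)]
    simp
  constructor
  · intro x s hx hs
    have hu : ∀ i, 0 < x i * s i := fun i => mul_pos (hx i) (hs i)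
    obtain ⟨j, hj⟩ := exists_eq_ciInf_of_finite (f := fun i => x i * s i)
    rw [← hj]
    have hne : (Finset.univ.erase j).Nonempty := by
      rw [← Finset.card_pos]
      have := hcard j
      have h0 : (0:ℝ) < ((Finset.univ.erase j).card : ℝ) := by rw [this]; exact hn1
      exact_mod_cast h0
    rw [← Finset.add_sum_erase _ (fun i => 1 / (x i * s i)) (Finset.mem_univ j),
      ← Finset.add_sum_erase _ (fun i => x i * s i) (Finset.mem_univ j)]
    have hT : 0 < ∑ i ∈ Finset.univ.erase j, x i * s i := Finset.sum_pos (fun i _ => hu i) hne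
    have hC := Finset.sq_sum_div_le_sum_sq_div (Finset.univ.erase j) (fun _ => (1:ℝ))
      (g := fun i => x i * s i) (fun i _ => hu i)
    simp only [Finset.sum_const, nsmul_eq_mul, mul_one, one_pow, hcard] at hC
    have hm := hu j
    beta_reduce
    set m := x j * s j
    set T := ∑ i ∈ Finset.univ.erase j, x i * s i
    set R := ∑ i ∈ Finset.univ.erase j, 1 / (x i * s i)
    have hid := key_id τ m (T / (((n:ℝ) - 1) * m)) ((n:ℝ) - 1) hτ hm (by positivity) hn1 hτ2
    have e : ((n:ℝ) - 1) * (T / (((n:ℝ) - 1) * m)) * m = T := by field_simp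
    rw [e] at hid
    have hpos : 0 ≤ ((n:ℝ) - 1) * (T / (((n:ℝ) - 1) * m) - (1 + τ)) ^ 2 /
      (τ * (τ + 2) * m * (T / (((n:ℝ) - 1) * m)) * (1 + ((n:ℝ) - 1) * (T / (((n:ℝ) - 1) * m)))) := by
      positivity
    have h1 : 1 / m ≤ ρ * (1 / m + ((n:ℝ) - 1) ^ 2 / T - ((n:ℝ) - 1 + 1) * ((n:ℝ) - 1) / (m + T)) := by
      linarith
    refine h1.trans (mul_le_mul_of_nonneg_left ?_ hρ.le)
    rw [sub_add_cancel]
    linarith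
  · intro c hc
    let j : Fin n := ⟨0, by omega⟩
    have h := hc (fun i => if i = j then 1 else 1 + τ) (fun _ => 1)
      (fun i => by split_ifs <;> positivity) (fun _ => one_pos)
    have hinf : (⨅ i : Fin n, (if i = j then (1:ℝ) else 1 + τ) * 1) = 1 := by
      apply le_antisymm
      · refine (ciInf_le (Set.finite_range _).bddBelow j).trans ?_
        simp
      · refine le_ciInf fun i => ?_
        split_ifs <;> linarith
    have s1 : (∑ i : Fin n, 1 / ((if i = j then (1:ℝ) else 1 + τ) * 1))
        = 1 + ((n:ℝ) - 1) * (1 / (1 + τ)) := by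
      rw [← Finset.add_sum_erase _ _ (Finset.mem_univ j), ← hcard j, ← nsmul_eq_mul,
        ← Finset.sum_const]
      congr 1
      · simp
      · refine Finset.sum_congr rfl fun i hi => ?_
        rw [if_neg (Finset.ne_of_mem_erase hi), mul_one]
    have s2 : (∑ i : Fin n, (if i = j then (1:ℝ) else 1 + τ) * 1)
        = 1 + ((n:ℝ) - 1) * (1 + τ) := by
      rw [← Finset.add_sum_erase _ _ (Finset.mem_univ j), ← hcard j, ← nsmul_eq_mul,
        ← Finset.sum_const]
      congr 1
      · simp
      · refine Finset.sum_congr rfl fun i hi => ?_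
        rw [if_neg (Finset.ne_of_mem_erase hi), mul_one]
    beta_reduce at h
    rw [hinf, s1, s2] at h
    have hid := key_id τ 1 (1 + τ) ((n:ℝ) - 1) hτ one_pos (by positivity) hn1 hτ2
    have e : ((n:ℝ) - 1) ^ 2 / (((n:ℝ) - 1) * (1 + τ) * 1) = ((n:ℝ) - 1) * (1 / (1 + τ)) := by
      field_simp
    rw [e, sub_add_cancel, sub_self, mul_one] at hid
    norm_num only at hid h
    set D := 1 + ((n:ℝ) - 1) * (1 / (1 + τ)) - (n:ℝ) * ((n:ℝ) - 1) / (1 + ((n:ℝ) - 1) * (1 + τ))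
    have hD : ρ * D = 1 := by
      have : ρ * D - 1 = 0 := by simpa using hid
      linarith
    have hDp : 0 < D := by
      by_contra hh
      have := mul_nonpos_of_nonneg_of_nonpos hρ.le (not_lt.mp hh)
      linarith
    exact le_of_mul_le_mul_right (by linarith) hDp
end

section
/- Let n ≥ 2 and let F(x) = −Σ_{i=1}^n ln x_i on ℝⁿ_{++}. For x, s ∈ ℝⁿ_{++}, let T be the diagonal matrix with entries T_{ii} = s_i/x_i, let x̃ = (1/s_1, …, 1/s_n), s̃ = (1/x_1, …, 1/x_n), and δ = Σ_i 1/(x_i s_i) − n(n−1)/(Σ_i x_i s_i). Then Tx = s, Tx̃ = s̃, and (1/(ρ_n δ))·diag(1/x_i²) ⪯ T ⪯ ρ_n δ·diag(s_i²), i.e., T ∈ T(x,s;ρ_n). -/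
open scoped BigOperators
open Matrix

lemma key_ineq (a R t m : ℝ) (ha : 0 < a) (hR : 0 < R) (ht : 1 < t) (hm : m = 1 / ((t-1)*(t+1))) :
    1 / a ≤ (t+1)^2/(t*(t+2)) * (1/a + m^2/R - (t^2*m)*m/(a+R)) := by
  have h1 : 0 < t - 1 := by linarith
  have h2 : 0 < t + 1 := by linarith
  have h3 : 0 < t := by linarith
  have h4 : 0 < a + R := by linarith
  have h5 : 0 < t + 2 := by linarith
  have e : (t+1)^2/(t*(t+2)) * (1/a + m^2/R - (t^2*m)*m/(a+R)) - 1/a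
      = ((t-1)*R - a)^2 / (t*(t+2)*(t-1)^2*(a*R*(a+R))) := by
    subst hm
    field_simp
    ring
  have : 0 ≤ ((t-1)*R - a)^2 / (t*(t+2)*(t-1)^2*(a*R*(a+R))) := by positivity
  linarith

lemma main_ineq (n : ℕ) (hn : 2 ≤ n) (v : Fin n → ℝ) (hv : ∀ i, 0 < v i) (t : ℝ)
    (ht : t = Real.sqrt ((n : ℝ) / ((n : ℝ) - 1))) (j : Fin n) :
    1 / v j ≤ (t+1)^2/(t*(t+2)) * ((∑ i, 1 / v i) - (n : ℝ) * ((n : ℝ) - 1) / ∑ i, v i) := by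
  have hn' : (2:ℝ) ≤ n := by exact_mod_cast hn
  have hm0 : 0 < (n:ℝ) - 1 := by linarith
  have ht2 : t^2 = (n : ℝ) / ((n : ℝ) - 1) := by
    rw [ht]; exact Real.sq_sqrt (by positivity)
  have ht1 : 1 < t := by
    rw [ht]; apply Real.lt_sqrt_of_sq_lt
    rw [lt_div_iff₀ hm0]; linarith
  have hnm : (n:ℝ) = t^2 * ((n:ℝ)-1) := by rw [ht2]; field_simp
  have hm : (n:ℝ) - 1 = 1 / ((t-1)*(t+1)) := by
    have : (t-1)*(t+1) ≠ 0 := by nlinarith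
    rw [eq_div_iff this]; linarith
  set S := Finset.univ.erase j with hS
  have hcard : (S.card : ℝ) = (n:ℝ) - 1 := by
    rw [hS, Finset.card_erase_of_mem (Finset.mem_univ j)]
    simp only [Finset.card_univ, Fintype.card_fin]
    rw [Nat.cast_sub (by omega)]; simp
  have hne : S.Nonempty := by
    rw [← Finset.card_pos]
    have : (0:ℝ) < S.card := by rw [hcard]; exact hm0
    exact_mod_cast this
  have hR : 0 < ∑ i ∈ S, v i := Finset.sum_pos (fun i _ => hv i) hne
  have hc := Finset.sq_sum_div_le_sum_sq_div S (fun _ => (1:ℝ)) (g := v) (fun i _ => hv i)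
  simp only [Finset.sum_const, nsmul_eq_mul, mul_one, one_pow, hcard] at hc
  have e1 : ∑ i, v i = v j + ∑ i ∈ S, v i := (Finset.add_sum_erase _ _ (Finset.mem_univ j)).symm
  have e2 : ∑ i, 1 / v i = 1 / v j + ∑ i ∈ S, 1 / v i :=
    (Finset.add_sum_erase _ (fun i => 1 / v i) (Finset.mem_univ j)).symm
  refine (key_ineq (v j) _ t _ (hv j) hR ht1 hm).trans ?_
  rw [← hnm, e1, e2]
  have : 0 ≤ (t+1)^2/(t*(t+2)) := by positivity
  exact mul_le_mul_of_nonneg_left (by linarith) this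

/-- For the logarithmic barrier on `ℝⁿ₊₊` (`n ≥ 2`) and `x, s ∈ ℝⁿ₊₊`, the
diagonal matrix `T` with `T_{ii} = sᵢ/xᵢ` satisfies `Tx = s`, `Tx̃ = s̃` where
`x̃ = (1/s₁,…,1/sₙ)`, `s̃ = (1/x₁,…,1/xₙ)`, and, with
`δ = Σ_i 1/(xᵢsᵢ) − n(n−1)/Σ_i xᵢsᵢ`,
`(1/(ρ_n δ)) diag(1/xᵢ²) ⪯ T ⪯ ρ_n δ diag(sᵢ²)`; `T` is symmetric positive definite,
i.e. `T ∈ 𝒯(x,s;ρ_n)`. -/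
theorem stmt12 (n : ℕ) (hn : 2 ≤ n) (x s : Fin n → ℝ)
    (hx : ∀ i, 0 < x i) (hs : ∀ i, 0 < s i) :
    let τ : ℝ := Real.sqrt ((n : ℝ) / ((n : ℝ) - 1))
    let ρ : ℝ := (τ + 1)^2 / (τ * (τ + 2))
    let δ : ℝ := (∑ i, 1 / (x i * s i)) - (n : ℝ) * ((n : ℝ) - 1) / (∑ i, x i * s i)
    let T : Matrix (Fin n) (Fin n) ℝ := Matrix.diagonal (fun i => s i / x i)
    T.PosDef ∧
    T *ᵥ x = s ∧
    T *ᵥ (fun i => 1 / s i) = (fun i => 1 / x i) ∧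
    (T - (1 / (ρ * δ)) • Matrix.diagonal (fun i => 1 / (x i)^2)).PosSemidef ∧
    ((ρ * δ) • Matrix.diagonal (fun i => (s i)^2) - T).PosSemidef := by
  intro τ ρ δ T
  have key : ∀ i, 1 / (x i * s i) ≤ ρ * δ := fun i =>
    main_ineq n hn (fun i => x i * s i) (fun i => mul_pos (hx i) (hs i)) τ rfl i
  refine ⟨?_, ?_, ?_, ?_, ?_⟩
  · exact Matrix.PosDef.diagonal (fun i => div_pos (hs i) (hx i))
  · ext i
    have := (hx i).ne'
    simp only [T, Matrix.mulVec_diagonal]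
    field_simp
  · ext i
    have := (hx i).ne'
    have := (hs i).ne'
    simp only [T, Matrix.mulVec_diagonal]
    field_simp
  · simp only [T]
    rw [← Matrix.diagonal_smul, Matrix.diagonal_sub]
    refine Matrix.PosSemidef.diagonal (fun i => ?_)
    have h1 := hx i
    have h2 := hs i
    have hp : 0 < 1 / (x i * s i) := by positivity
    have h3 : 1 / (ρ * δ) ≤ x i * s i := by
      have := one_div_le_one_div_of_le hp (key i)
      rwa [one_div_one_div] at this
    have h4 := mul_le_mul_of_nonneg_right h3 (by positivity : 0 ≤ 1 / x i ^ 2)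
    have h5 : x i * s i * (1 / x i ^ 2) = s i / x i := by field_simp
    simp only [Pi.zero_apply, Pi.smul_apply, smul_eq_mul]
    linarith
  · simp only [T]
    rw [← Matrix.diagonal_smul, Matrix.diagonal_sub]
    refine Matrix.PosSemidef.diagonal (fun i => ?_)
    have h1 := hx i
    have h2 := hs i
    have h4 := mul_le_mul_of_nonneg_right (key i) (by positivity : 0 ≤ s i ^ 2)
    have h5 : 1 / (x i * s i) * s i ^ 2 = s i / x i := by field_simp
    simp only [Pi.zero_apply, Pi.smul_apply, smul_eq_mul]
    linarith
end

section
/- Let n ≥ 2, let F(x) = −Σ_{i=1}^n ln x_i on ℝⁿ_{++}, and fix s ∈ ℝⁿ_{++}, μ > 0, and an index i ∈ {1,…,n}. Define x ∈ ℝⁿ_{++} by x_i = (τ_n/(τ_n+1))·μ/s_i and x_j = τ_n·μ/s_j for j ≠ i. Then the pair (x,s) attains the worst case for the complexity measure: min_j(x_j s_j)·(Σ_j 1/(x_j s_j) − n(n−1)/(Σ_j x_j s_j)) = 1/ρ_n. -/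
open scoped BigOperators

/-- For the logarithmic barrier on `ℝⁿ₊₊` (`n ≥ 2`), fix `s ∈ ℝⁿ₊₊`, `μ > 0`,
and an index `i`.  The point `x` with `xᵢ = (τ_n/(τ_n+1)) μ/sᵢ` and `x_j = τ_n μ/s_j` for
`j ≠ i` is positive and attains the worst case for the complexity measure:
`min_j(x_j s_j) (Σ_j 1/(x_j s_j) − n(n−1)/Σ_j x_j s_j) = 1/ρ_n`. -/
theorem stmt13 (n : ℕ) (hn : 2 ≤ n) (s : Fin n → ℝ) (hs : ∀ j, 0 < s j)
    (μ : ℝ) (hμ : 0 < μ) (i : Fin n) :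
    let τ : ℝ := Real.sqrt ((n : ℝ) / ((n : ℝ) - 1))
    let ρ : ℝ := (τ + 1)^2 / (τ * (τ + 2))
    let x : Fin n → ℝ := fun j => if j = i then (τ / (τ + 1)) * μ / s i else τ * μ / s j
    (∀ j, 0 < x j) ∧
    (⨅ j, x j * s j) *
        ((∑ j, 1 / (x j * s j)) - (n : ℝ) * ((n : ℝ) - 1) / (∑ j, x j * s j)) = 1 / ρ := by
  intro τ ρ x
  have hn' : (2:ℝ) ≤ n := by exact_mod_cast hn
  have hm : (0:ℝ) < (n:ℝ) - 1 := by linarith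
  have hτ : 0 < τ := Real.sqrt_pos.mpr (by positivity)
  have hsq : τ ^ 2 = (n:ℝ) / ((n:ℝ) - 1) := Real.sq_sqrt (by positivity)
  have hsq1 : τ ^ 2 * ((n:ℝ) - 1) = n := by rw [hsq]; field_simp
  have hprod : ∀ j, x j * s j = if j = i then τ / (τ + 1) * μ else τ * μ := by
    intro j
    have := (hs j).ne'
    simp only [x]
    split_ifs with h
    · subst h; field_simp
    · field_simp
  have hle : τ / (τ + 1) * μ ≤ τ * μ := by
    apply mul_le_mul_of_nonneg_right _ hμ.le
    exact div_le_self hτ.le (by linarith)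
  have hsum : ∀ a b : ℝ, (∑ j : Fin n, if j = i then a else b) = a + ((n:ℝ) - 1) * b := by
    intro a b
    have : ∀ j : Fin n, (if j = i then a else b) = b + if j = i then a - b else 0 := by
      intro j; split_ifs <;> ring
    simp only [this, Finset.sum_add_distrib]
    simp
    ring
  refine ⟨?_, ?_⟩
  · intro j
    have := hs j
    have := hs i
    simp only [x]
    split_ifs <;> positivity
  · have hinf : (⨅ j, x j * s j) = τ / (τ + 1) * μ := by
      haveI : Nonempty (Fin n) := ⟨i⟩
      apply le_antisymm
      · have := ciInf_le (Set.finite_range (fun j => x j * s j)).bddBelow i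
        simpa [hprod i] using this
      · apply le_ciInf
        intro j
        rw [hprod j]
        split_ifs
        · exact le_rfl
        · exact hle
    have h1 : (∑ j, 1 / (x j * s j)) = 1 / (τ / (τ + 1) * μ) + ((n:ℝ) - 1) * (1 / (τ * μ)) := by
      rw [← hsum]
      refine Finset.sum_congr rfl fun j _ => ?_
      rw [hprod j]; split_ifs <;> rfl
    have h2 : (∑ j, x j * s j) = τ / (τ + 1) * μ + ((n:ℝ) - 1) * (τ * μ) := by
      rw [← hsum]
      exact Finset.sum_congr rfl fun j _ => hprod j
    rw [hinf, h1, h2]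
    simp only [ρ]
    clear_value τ
    generalize hmm : (n:ℝ) - 1 = m at *
    have hnm : (n:ℝ) = m + 1 := by linarith
    have hk : (τ ^ 2 - 1) * m = 1 := by linarith
    have h3 : τ / (τ + 1) * μ + m * (τ * μ) = n * μ := by
      rw [← hsq1]; field_simp
      linear_combination (-1) * hk
    have hn0 : (n:ℝ) ≠ 0 := by linarith
    rw [h3]
    have h4 : (n:ℝ) * m / (n * μ) = m / μ := by field_simp
    rw [h4]
    field_simp
    linear_combination (-1) * hk
end
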